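/- Let α be a badly approximable irrational real number, λ = exp(2πiα), and let m₁(x) = Σ_{k≥0} x^k/(D(1)···D(k)) be the linear solution (radius of convergence 1). Define the matrix A(x) = [[2 − x, −1], [1, 0]] and the vector V(x) = (m₁(x), m₁(x/λ)) for |x| < 1. Then V satisfies the cocycle relation V(λx) = A(x)·V(x), hence for every n ≥ 1, V(λⁿx) = A(λ^{n−1}x)···A(λx)·A(x)·V(x); moreover for each fixed x with |x| < 1 the vector V(x) is nonzero and the sequence of matrix products applied to V(x) remains bounded: sup_{n} ‖A(λ^{n−1}x)···A(x)·V(x)‖ < ∞. -/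

import Mathlib

open Filter Matrix

/-- `D α k = 2(1 - cos(2πkα))`, the small denominator of the Master recursion. -/
noncomputable def D (α : ℝ) (k : ℕ) : ℝ := 2 * (1 - Real.cos (2 * Real.pi * k * α))

/-- The ordered product `A (n-1) * ⋯ * A 1 * A 0` of a sequence of `2×2` complex
matrices (empty product is the identity). -/
noncomputable def matProd (A : ℕ → Matrix (Fin 2) (Fin 2) ℂ) : ℕ → Matrix (Fin 2) (Fin 2) ℂ
  | 0 => 1
  | (n + 1) => A n * matProd A n

lemma sum_inv_sqrt_le (M : ℕ) :
    ∑ t ∈ Finset.Icc 1 M, 1 / √(t : ℝ) ≤ 2 * √(M : ℝ) := by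
  induction M with
  | zero => simp
  | succ M ih =>
    rw [Finset.sum_Icc_succ_top (by omega)]
    have h1 : 0 < √((M + 1 : ℕ) : ℝ) := Real.sqrt_pos.mpr (by positivity)
    have h2 : 1 / √((M + 1 : ℕ) : ℝ) ≤ 2 * √((M + 1 : ℕ) : ℝ) - 2 * √(M : ℝ) := by
      rw [div_le_iff₀ h1]
      have h3 := Real.sq_sqrt (show (0 : ℝ) ≤ ((M + 1 : ℕ) : ℝ) by positivity)
      have h4 := Real.sq_sqrt (show (0 : ℝ) ≤ (M : ℝ) by positivity)
      push_cast at h3 h4 ⊢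
      nlinarith [sq_nonneg (√((M : ℝ) + 1) - √(M : ℝ))]
    linarith

/-- For badly approximable `β`, the fractional parts of `β, 2β, …, kβ` are separated by `c / k`,
so the sum of their inverse square roots is `O(k)`. -/
lemma sum_inv_sqrt_fract_le {β c : ℝ} (hc : 0 < c)
    (hβ : ∀ (p : ℤ) (q : ℕ), 0 < q → c / q ≤ |q * β - p|) (k : ℕ) :
    ∑ j ∈ Finset.Icc 1 k, 1 / √(Int.fract (j * β)) ≤ 2 * k / c := by
  rcases Nat.eq_zero_or_pos k with rfl | hk
  · simp
  have hk' : (0 : ℝ) < k := by exact_mod_cast hk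
  have hge : ∀ j ∈ Finset.Icc 1 k, 1 ≤ Int.fract (j * β) * (k / c) := by
    intro j hj
    obtain ⟨hj1, hjk⟩ := Finset.mem_Icc.mp hj
    have h := hβ ⌊(j : ℝ) * β⌋ j (by omega)
    rw [Int.self_sub_floor, abs_of_nonneg (Int.fract_nonneg _)] at h
    have hj0 : (0 : ℝ) < j := by exact_mod_cast hj1
    have h2 : c / k ≤ c / j := by gcongr
    calc (1 : ℝ) = c / k * (k / c) := by field_simp
      _ ≤ _ := by gcongr; exact h2.trans h
  set t : ℕ → ℕ := fun j => ⌊Int.fract ((j : ℝ) * β) * (k / c)⌋₊ with ht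
  have hlt : ∀ i j : ℕ, 1 ≤ i → j ≤ k → i < j → t i ≠ t j := by
    intro i j hi hj hij heq
    have h := hβ (⌊(j : ℝ) * β⌋ - ⌊(i : ℝ) * β⌋) (j - i) (by omega)
    have hq : (0 : ℝ) < ((j - i : ℕ) : ℝ) := by exact_mod_cast (by omega : 0 < j - i)
    have hqk : ((j - i : ℕ) : ℝ) ≤ k := by exact_mod_cast (by omega : j - i ≤ k)
    have h2 : c / k ≤ c / ((j - i : ℕ) : ℝ) := by gcongr
    have h3 : ((j - i : ℕ) : ℝ) * β - ((⌊(j : ℝ) * β⌋ - ⌊(i : ℝ) * β⌋ : ℤ) : ℝ)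
        = Int.fract ((j : ℝ) * β) - Int.fract ((i : ℝ) * β) := by
      rw [Nat.cast_sub hij.le, ← Int.self_sub_floor, ← Int.self_sub_floor]
      push_cast
      ring
    rw [h3] at h
    have h4 := h2.trans h
    have hnn : ∀ n : ℕ, 0 ≤ Int.fract ((n : ℝ) * β) * (k / c) := fun n =>
      mul_nonneg (Int.fract_nonneg _) (by positivity)
    have a1 := Nat.floor_le (hnn i)
    have a2 := Nat.lt_floor_add_one (Int.fract ((i : ℝ) * β) * (k / c))
    have b1 := Nat.floor_le (hnn j)
    have b2 := Nat.lt_floor_add_one (Int.fract ((j : ℝ) * β) * (k / c))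
    have heq' : ((⌊Int.fract ((i : ℝ) * β) * (k / c)⌋₊ : ℕ) : ℝ)
        = ((⌊Int.fract ((j : ℝ) * β) * (k / c)⌋₊ : ℕ) : ℝ) := by exact_mod_cast heq
    have h5 : |Int.fract ((j : ℝ) * β) - Int.fract ((i : ℝ) * β)| * (k / c) < 1 := by
      have h6 : |(Int.fract ((j : ℝ) * β) - Int.fract ((i : ℝ) * β)) * (k / c)| < 1 := by
        rw [abs_lt]
        constructor <;> nlinarith
      rwa [abs_mul, abs_of_pos (show 0 < (k : ℝ) / c by positivity)] at h6
    have h6 : 1 ≤ |Int.fract ((j : ℝ) * β) - Int.fract ((i : ℝ) * β)| * (k / c) := by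
      calc (1 : ℝ) = c / k * (k / c) := by field_simp
        _ ≤ _ := by gcongr
    linarith
  have hinj : Set.InjOn t (Finset.Icc 1 k) := by
    intro i hi j hj hij
    rw [Finset.mem_coe, Finset.mem_Icc] at hi hj
    rcases lt_trichotomy i j with h | h | h
    · exact absurd hij (hlt i j hi.1 hj.2 h)
    · exact h
    · exact absurd hij.symm (hlt j i hj.1 hi.2 h)
  set M : ℕ := ⌊(k : ℝ) / c⌋₊ with hM
  have hkc : (0 : ℝ) < k / c := by positivity
  calc ∑ j ∈ Finset.Icc 1 k, 1 / √(Int.fract (j * β))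
      ≤ ∑ j ∈ Finset.Icc 1 k, √(k / c) * (1 / √(t j : ℝ)) := by
        refine Finset.sum_le_sum fun j hj => ?_
        have h1 := hge j hj
        have ht1 : 1 ≤ t j := (Nat.one_le_floor_iff _).mpr h1
        have ht0 : (0 : ℝ) < t j := by exact_mod_cast ht1
        have hf : 0 < Int.fract ((j : ℝ) * β) := pos_of_mul_pos_left (by linarith) hkc.le
        have h2 : (t j : ℝ) ≤ Int.fract ((j : ℝ) * β) * (k / c) :=
          Nat.floor_le (by positivity)
        have h3 : √(t j : ℝ) ≤ √(Int.fract ((j : ℝ) * β)) * √(k / c) := by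
          rw [← Real.sqrt_mul hf.le]
          exact Real.sqrt_le_sqrt h2
        rw [mul_one_div, div_le_div_iff₀ (Real.sqrt_pos.mpr hf) (Real.sqrt_pos.mpr ht0)]
        linarith
    _ = √(k / c) * ∑ s ∈ (Finset.Icc 1 k).image t, 1 / √(s : ℝ) := by
        rw [Finset.sum_image hinj, Finset.mul_sum]
    _ ≤ √(k / c) * ∑ s ∈ Finset.Icc 1 M, 1 / √(s : ℝ) := by
        refine mul_le_mul_of_nonneg_left
          (Finset.sum_le_sum_of_subset_of_nonneg ?_ fun _ _ _ => by positivity) (by positivity)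
        intro s hs
        obtain ⟨j, hj, rfl⟩ := Finset.mem_image.mp hs
        refine Finset.mem_Icc.mpr ⟨(Nat.one_le_floor_iff _).mpr (hge j hj), ?_⟩
        exact Nat.floor_le_floor (mul_le_of_le_one_left hkc.le (Int.fract_lt_one _).le)
    _ ≤ √(k / c) * (2 * √(k / c)) := by
        gcongr
        refine (sum_inv_sqrt_le M).trans ?_
        gcongr
        exact Nat.floor_le hkc.le
    _ = 2 * k / c := by
        have := Real.mul_self_sqrt hkc.le
        linear_combination 2 * this

lemma sum_inv_sqrt_abs_sub_round_le {α c : ℝ} (hc : 0 < c)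
    (hα : ∀ (p : ℤ) (q : ℕ), 0 < q → c / q ≤ |q * α - p|) (k : ℕ) :
    ∑ j ∈ Finset.Icc 1 k, 1 / √|(j : ℝ) * α - round ((j : ℝ) * α)| ≤ 4 * k / c := by
  have h1 := sum_inv_sqrt_fract_le hc hα k
  have hα' : ∀ (p : ℤ) (q : ℕ), 0 < q → c / q ≤ |q * (-α) - p| := by
    intro p q hq
    have h := hα (-p) q hq
    rw [← abs_neg] at h
    convert h using 2
    push_cast
    ring
  have h2 := sum_inv_sqrt_fract_le hc hα' k
  have h3 : ∑ j ∈ Finset.Icc 1 k, 1 / √|(j : ℝ) * α - round ((j : ℝ) * α)|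
      ≤ ∑ j ∈ Finset.Icc 1 k,
        (1 / √(Int.fract (j * α)) + 1 / √(Int.fract (j * (-α)))) := by
    refine Finset.sum_le_sum fun j hj => ?_
    have hj1 := (Finset.mem_Icc.mp hj).1
    have hne : Int.fract ((j : ℝ) * α) ≠ 0 := by
      have h := hα ⌊(j : ℝ) * α⌋ j hj1
      rw [Int.self_sub_floor] at h
      intro h0
      rw [h0, abs_zero] at h
      have hj0 : (0 : ℝ) < j := by exact_mod_cast hj1
      have : 0 < c / j := by positivity
      linarith
    rw [abs_sub_round_eq_min, mul_neg, Int.fract_neg hne]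
    rcases min_choice (Int.fract ((j : ℝ) * α)) (1 - Int.fract ((j : ℝ) * α)) with h | h <;>
      rw [h]
    · exact le_add_of_nonneg_right (by positivity)
    · exact le_add_of_nonneg_left (by positivity)
  rw [Finset.sum_add_distrib] at h3
  calc _ ≤ _ := h3
    _ ≤ 2 * k / c + 2 * k / c := add_le_add h1 h2
    _ = 4 * k / c := by ring

lemma exp_pow_re {α : ℝ} {l : ℂ} (hl : l = Complex.exp (2 * Real.pi * Complex.I * (α : ℂ)))
    (n : ℕ) : (l ^ n).re = Real.cos (2 * Real.pi * n * α) := by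
  rw [hl, ← Complex.exp_nat_mul, show (n : ℂ) * (2 * Real.pi * Complex.I * (α : ℂ))
    = ((2 * Real.pi * n * α : ℝ) : ℂ) * Complex.I by push_cast; ring, Complex.exp_ofReal_mul_I_re]

lemma norm_exp_eq_one {α : ℝ} {l : ℂ}
    (hl : l = Complex.exp (2 * Real.pi * Complex.I * (α : ℂ))) : ‖l‖ = 1 := by
  rw [hl, show 2 * Real.pi * Complex.I * (α : ℂ)
    = ((2 * Real.pi * α : ℝ) : ℂ) * Complex.I by push_cast; ring, Complex.norm_exp_ofReal_mul_I]

lemma D_eq_norm_sq {α : ℝ} {l : ℂ} (hl : l = Complex.exp (2 * Real.pi * Complex.I * (α : ℂ)))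
    (n : ℕ) : D α n = ‖1 - l ^ n‖ ^ 2 := by
  have h1 : Complex.normSq (l ^ n) = 1 := by
    rw [Complex.normSq_eq_norm_sq, norm_pow, norm_exp_eq_one hl]; simp
  rw [← Complex.normSq_eq_norm_sq, Complex.normSq_sub, h1, D, ← exp_pow_re hl]
  simp only [map_one, one_mul, Complex.conj_re]
  ring

lemma four_mul_abs_sub_round_le {α : ℝ} {l : ℂ}
    (hl : l = Complex.exp (2 * Real.pi * Complex.I * (α : ℂ))) (n : ℕ) :
    4 * |(n : ℝ) * α - round ((n : ℝ) * α)| ≤ ‖1 - l ^ n‖ := by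
  refine le_of_sq_le_sq ?_ (norm_nonneg _)
  rw [← D_eq_norm_sq hl, D]
  set y := (n : ℝ) * α - round ((n : ℝ) * α) with hy
  have hy2 : |y| ≤ 1 / 2 := abs_sub_round _
  have h1 : Real.cos (2 * Real.pi * n * α) = Real.cos (2 * Real.pi * y) := by
    rw [show 2 * Real.pi * y = 2 * Real.pi * n * α - round ((n : ℝ) * α) * (2 * Real.pi) by
      rw [hy]; ring, Real.cos_sub_int_mul_two_pi]
  have h2 := Real.mul_le_sin (x := Real.pi * |y|) (by positivity) (by nlinarith [Real.pi_pos])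
  rw [← mul_assoc, div_mul_cancel₀ _ Real.pi_ne_zero] at h2
  have h3 : Real.cos (2 * Real.pi * y) = 1 - 2 * Real.sin (Real.pi * |y|) ^ 2 := by
    rw [← Real.cos_abs, abs_mul, abs_of_pos (by positivity : 0 < 2 * Real.pi), mul_assoc,
      Real.cos_two_mul, Real.cos_sq']
    ring
  rw [h1, h3]
  nlinarith [abs_nonneg y]

lemma norm_sum_pow_le {α c : ℝ} {l : ℂ} (hc : 0 < c)
    (hα : ∀ (p : ℤ) (q : ℕ), 0 < q → c / q ≤ |q * α - p|)
    (hl : l = Complex.exp (2 * Real.pi * Complex.I * (α : ℂ))) {n : ℕ} (hn : 0 < n) (N : ℕ) :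
    ‖∑ j ∈ Finset.range N, (l ^ n) ^ j‖ ≤ n / (2 * c) := by
  have hn' : (0 : ℝ) < n := by exact_mod_cast hn
  have h1 : 4 * (c / n) ≤ ‖1 - l ^ n‖ :=
    le_trans (by gcongr; exact hα _ n hn) (four_mul_abs_sub_round_le hl n)
  have h2 : ‖∑ j ∈ Finset.range N, (l ^ n) ^ j‖ * ‖1 - l ^ n‖ ≤ 2 := by
    rw [← norm_mul, geom_sum_mul_neg]
    refine (norm_sub_le _ _).trans ?_
    simp only [norm_pow, norm_exp_eq_one hl, one_pow, norm_one]
    norm_num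
  have h3 : ‖∑ j ∈ Finset.range N, (l ^ n) ^ j‖ * (4 * (c / n)) ≤ 2 :=
    (mul_le_mul_of_nonneg_left h1 (norm_nonneg _)).trans h2
  rw [le_div_iff₀ (by positivity)]
  have h4 : ‖∑ j ∈ Finset.range N, (l ^ n) ^ j‖ * (4 * (c / n))
      = 2 * (‖∑ j ∈ Finset.range N, (l ^ n) ^ j‖ * (2 * c)) / n := by
    field_simp
    ring
  rw [h4, div_le_iff₀ hn'] at h3
  linarith

lemma neg_le_sum_log_norm_one_sub {α c r : ℝ} {l : ℂ} (hc : 0 < c)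
    (hα : ∀ (p : ℤ) (q : ℕ), 0 < q → c / q ≤ |q * α - p|)
    (hl : l = Complex.exp (2 * Real.pi * Complex.I * (α : ℂ))) (hr0 : 0 ≤ r) (hr1 : r < 1)
    (k : ℕ) :
    -((1 - r)⁻¹ * (1 / (2 * c))) ≤ ∑ j ∈ Finset.Icc 1 k, Real.log ‖1 - r * l ^ j‖ := by
  have hnorm : ∀ j : ℕ, ‖(r : ℂ) * l ^ j‖ < 1 := fun j => by
    simpa [norm_exp_eq_one hl, abs_of_nonneg hr0] using hr1
  have hsum := hasSum_sum (s := Finset.Icc 1 k)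
    fun j _ => Complex.hasSum_taylorSeries_neg_log (hnorm j)
  have hbound : ∀ n : ℕ, ‖∑ j ∈ Finset.Icc 1 k, ((r : ℂ) * l ^ j) ^ n / n‖
      ≤ r ^ n * (1 / (2 * c)) := by
    intro n
    rcases Nat.eq_zero_or_pos n with rfl | hn
    · simpa using hc.le
    have hn' : (0 : ℝ) < n := by exact_mod_cast hn
    have h1 : ∑ j ∈ Finset.Icc 1 k, ((r : ℂ) * l ^ j) ^ n / n
        = (r : ℂ) ^ n / n * (l ^ n * ∑ j ∈ Finset.range k, (l ^ n) ^ j) := by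
      rw [← Finset.Ico_add_one_right_eq_Icc, Finset.sum_Ico_eq_sum_range, Finset.mul_sum,
        Finset.mul_sum]
      refine Finset.sum_congr (by simp) fun j _ => ?_
      rw [mul_pow, ← pow_mul, ← pow_mul, ← pow_add, show (1 + j) * n = n + n * j by ring]
      ring
    rw [h1]
    simp only [norm_mul, norm_div, norm_pow, norm_exp_eq_one hl, one_pow, one_mul,
      Complex.norm_natCast, Complex.norm_real, Real.norm_eq_abs, abs_of_nonneg hr0]
    calc r ^ n / n * ‖∑ j ∈ Finset.range k, (l ^ n) ^ j‖ ≤ r ^ n / n * (n / (2 * c)) := by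
          gcongr
          exact norm_sum_pow_le hc hα hl hn k
      _ = r ^ n * (1 / (2 * c)) := by field_simp
  have h2 := tsum_of_norm_bounded ((hasSum_geometric_of_lt_one hr0 hr1).mul_right _) hbound
  rw [hsum.tsum_eq] at h2
  have h3 := (Complex.re_le_norm _).trans h2
  simp only [Complex.re_sum, Complex.neg_re, Complex.log_re, Finset.sum_neg_distrib] at h3
  linarith

lemma log_one_add_sq_le {v : ℝ} (hv : 0 ≤ v) : Real.log (1 + v ^ 2) ≤ 2 * v := by
  calc Real.log (1 + v ^ 2) ≤ Real.log ((1 + v) ^ 2) :=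
        Real.log_le_log (by positivity) (by nlinarith)
    _ = 2 * Real.log (1 + v) := by rw [Real.log_pow]; norm_num
    _ ≤ 2 * v := by linarith [Real.log_le_sub_one_of_pos (show 0 < 1 + v by linarith)]

lemma abs_sub_round_pos {α c : ℝ} (hc : 0 < c)
    (hα : ∀ (p : ℤ) (q : ℕ), 0 < q → c / q ≤ |q * α - p|) {n : ℕ} (hn : 0 < n) :
    0 < |(n : ℝ) * α - round ((n : ℝ) * α)| := by
  have hn' : (0 : ℝ) < n := by exact_mod_cast hn
  exact lt_of_lt_of_le (by positivity) (hα (round ((n : ℝ) * α)) n hn)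

lemma norm_one_sub_pow_pos {α c : ℝ} {l : ℂ} (hc : 0 < c)
    (hα : ∀ (p : ℤ) (q : ℕ), 0 < q → c / q ≤ |q * α - p|)
    (hl : l = Complex.exp (2 * Real.pi * Complex.I * (α : ℂ))) {n : ℕ} (hn : 0 < n) :
    0 < ‖1 - l ^ n‖ := by
  have := four_mul_abs_sub_round_le hl n
  linarith [abs_sub_round_pos hc hα hn]

lemma log_norm_one_sub_mul_pow_le {α c r : ℝ} {l : ℂ} (hc : 0 < c)
    (hα : ∀ (p : ℤ) (q : ℕ), 0 < q → c / q ≤ |q * α - p|)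
    (hl : l = Complex.exp (2 * Real.pi * Complex.I * (α : ℂ))) (hr0 : 0 ≤ r) (hr1 : r < 1)
    {n : ℕ} (hn : 0 < n) :
    Real.log ‖1 - r * l ^ n‖ ≤
      Real.log ‖1 - l ^ n‖ + √(1 - r) * (1 / √|(n : ℝ) * α - round ((n : ℝ) * α)|) := by
  have hd := abs_sub_round_pos hc hα hn
  have h4 := four_mul_abs_sub_round_le hl n
  have hpos := norm_one_sub_pow_pos hc hα hl hn
  set d := |(n : ℝ) * α - round ((n : ℝ) * α)|
  set u := ‖1 - l ^ n‖
  have hs : 0 < 1 - r := by linarith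
  have hpos' : 0 < ‖1 - r * l ^ n‖ := by
    rw [norm_pos_iff, sub_ne_zero]
    intro h
    have h' := congrArg norm h
    simp [norm_exp_eq_one hl, abs_of_nonneg hr0] at h'
    linarith
  have h1 : ‖1 - r * l ^ n‖ ≤ u * (1 + (√(1 - r) / (2 * √d)) ^ 2) := by
    have h2 : ‖1 - r * l ^ n‖ ≤ u + (1 - r) := by
      have h3 : 1 - r * l ^ n = (1 - l ^ n) + ((1 - r : ℝ) : ℂ) * l ^ n := by
        push_cast
        ring
      rw [h3]
      refine (norm_add_le _ _).trans_eq ?_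
      rw [norm_mul, norm_pow, norm_exp_eq_one hl, one_pow, mul_one, Complex.norm_real,
        Real.norm_of_nonneg hs.le]
    rw [div_pow, mul_pow, Real.sq_sqrt hs.le, Real.sq_sqrt hd.le]
    have h5 : 1 - r ≤ u * ((1 - r) / (2 ^ 2 * d)) := by
      rw [mul_div_assoc', le_div_iff₀ (by positivity)]
      nlinarith
    linarith
  calc Real.log ‖1 - r * l ^ n‖ ≤ Real.log (u * (1 + (√(1 - r) / (2 * √d)) ^ 2)) :=
        Real.log_le_log hpos' h1
    _ = Real.log u + Real.log (1 + (√(1 - r) / (2 * √d)) ^ 2) :=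
        Real.log_mul hpos.ne' (by positivity)
    _ ≤ Real.log u + 2 * (√(1 - r) / (2 * √d)) := by
        gcongr
        exact log_one_add_sq_le (by positivity)
    _ = Real.log u + √(1 - r) * (1 / √d) := by field_simp

/-- For badly approximable `α`, the products `D(1)⋯D(k)` decay subexponentially at worst. -/
lemma exists_exp_le_prod_D {α c ε : ℝ} (hc : 0 < c)
    (hα : ∀ (p : ℤ) (q : ℕ), 0 < q → c / q ≤ |q * α - p|) (hε : 0 < ε) :
    ∃ B : ℝ, ∀ k : ℕ, Real.exp (-B - ε * k) ≤ ∏ j ∈ Finset.Icc 1 k, D α j := by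
  obtain ⟨l, hl⟩ : ∃ l : ℂ, l = Complex.exp (2 * Real.pi * Complex.I * (α : ℂ)) := ⟨_, rfl⟩
  obtain ⟨r, hr0, hr1, hr⟩ : ∃ r : ℝ, 0 ≤ r ∧ r < 1 ∧ √(1 - r) ≤ ε * c / 8 := by
    have hδ : 0 < ε * c / 8 := by positivity
    refine ⟨1 - min 1 ((ε * c / 8) ^ 2), by linarith [min_le_left 1 ((ε * c / 8) ^ 2)], ?_, ?_⟩
    · have : 0 < min 1 ((ε * c / 8) ^ 2) := lt_min one_pos (by positivity)
      linarith
    · rw [sub_sub_cancel]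
      exact (Real.sqrt_le_sqrt (min_le_right _ _)).trans_eq (Real.sqrt_sq hδ.le)
  refine ⟨2 * ((1 - r)⁻¹ * (1 / (2 * c))), fun k => ?_⟩
  have hDpos : ∀ j ∈ Finset.Icc 1 k, 0 < D α j := fun j hj => by
    rw [D_eq_norm_sq hl]
    exact pow_pos (norm_one_sub_pow_pos hc hα hl (Finset.mem_Icc.mp hj).1) 2
  rw [← Real.le_log_iff_exp_le (Finset.prod_pos hDpos),
    Real.log_prod fun j hj => (hDpos j hj).ne']
  have h1 : ∑ j ∈ Finset.Icc 1 k, Real.log (D α j)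
      = 2 * ∑ j ∈ Finset.Icc 1 k, Real.log ‖1 - l ^ j‖ := by
    rw [Finset.mul_sum]
    refine Finset.sum_congr rfl fun j _ => ?_
    rw [D_eq_norm_sq hl, Real.log_pow]
    norm_num
  have h2 := neg_le_sum_log_norm_one_sub hc hα hl hr0 hr1 k
  have h3 := Finset.sum_le_sum fun j (hj : j ∈ Finset.Icc 1 k) =>
    log_norm_one_sub_mul_pow_le hc hα hl hr0 hr1 (Finset.mem_Icc.mp hj).1
  rw [Finset.sum_add_distrib, ← Finset.mul_sum] at h3
  have h4 : √(1 - r) * ∑ j ∈ Finset.Icc 1 k, 1 / √|(j : ℝ) * α - round ((j : ℝ) * α)|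
      ≤ ε * c / 8 * (4 * k / c) :=
    mul_le_mul hr (sum_inv_sqrt_abs_sub_round_le hc hα k)
      (Finset.sum_nonneg fun _ _ => by positivity) (by positivity)
  have h5 : ε * c / 8 * (4 * k / c) = ε * k / 2 := by
    field_simp
    ring
  rw [h1]
  linarith

lemma exists_norm_term_le {α c R : ℝ} (hc : 0 < c)
    (hα : ∀ (p : ℤ) (q : ℕ), 0 < q → c / q ≤ |q * α - p|) (hR : R < 1) :
    ∃ C ρ : ℝ, 0 ≤ C ∧ 0 ≤ ρ ∧ ρ < 1 ∧ ∀ (y : ℂ) (k : ℕ), ‖y‖ ≤ R →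
      ‖y ^ k / ∏ j ∈ Finset.Icc 1 k, (D α j : ℂ)‖ ≤ C * ρ ^ k := by
  set S := max R (1 / 2) with hS
  have hS0 : 0 < S := lt_of_lt_of_le (by norm_num) (le_max_right _ _)
  have hS1 : S < 1 := max_lt hR (by norm_num)
  have hlog : Real.log S < 0 := Real.log_neg hS0 hS1
  obtain ⟨B, hB⟩ := exists_exp_le_prod_D hc hα (ε := -Real.log S / 2) (by linarith)
  refine ⟨Real.exp B, Real.exp (Real.log S / 2), (Real.exp_pos _).le, (Real.exp_pos _).le,
    Real.exp_lt_one_iff.mpr (by linarith), fun y k hy => ?_⟩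
  have hpos := (Real.exp_pos _).trans_le (hB k)
  rw [norm_div, ← Complex.ofReal_prod, Complex.norm_real, Real.norm_of_nonneg hpos.le, norm_pow,
    div_le_iff₀ hpos]
  calc ‖y‖ ^ k ≤ S ^ k := by
        gcongr
        exact hy.trans (le_max_left _ _)
    _ = Real.exp B * Real.exp (Real.log S / 2) ^ k *
          Real.exp (-B - -Real.log S / 2 * k) := by
        rw [← Real.exp_nat_mul, ← Real.exp_add, ← Real.exp_add]
        nth_rewrite 1 [← Real.exp_log hS0]
        rw [← Real.exp_nat_mul]
        congr 1
        ring
    _ ≤ _ := by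
        gcongr
        exact hB k

lemma D_eq_sub {α : ℝ} {l : ℂ} (hl : l = Complex.exp (2 * Real.pi * Complex.I * (α : ℂ)))
    (n : ℕ) : (D α n : ℂ) = 2 - l ^ n - (l⁻¹) ^ n := by
  have h1 : ‖l ^ n‖ = 1 := by rw [norm_pow, norm_exp_eq_one hl, one_pow]
  rw [inv_pow, Complex.inv_eq_conj h1, D, ← exp_pow_re hl]
  have := Complex.add_conj (l ^ n)
  push_cast at this ⊢
  linear_combination this

/-- The three-term `q`-difference equation of the linear solution. -/
lemma linear_solution_recurrence {α c : ℝ} {l : ℂ} (hc : 0 < c)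
    (hα : ∀ (p : ℤ) (q : ℕ), 0 < q → c / q ≤ |q * α - p|)
    (hl : l = Complex.exp (2 * Real.pi * Complex.I * (α : ℂ))) {m₁ : ℂ → ℂ}
    (hm₁ : ∀ x : ℂ, m₁ x = ∑' k : ℕ, x ^ k / ∏ j ∈ Finset.Icc 1 k, (D α j : ℂ))
    {y : ℂ} (hy : ‖y‖ < 1) : m₁ (l * y) = (2 - y) * m₁ y - m₁ (y / l) := by
  have hl1 := norm_exp_eq_one hl
  obtain ⟨C, ρ, -, hρ0, hρ1, hterm⟩ := exists_norm_term_le hc hα hy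
  have hs : ∀ z : ℂ, ‖z‖ ≤ ‖y‖ →
      HasSum (fun k : ℕ => z ^ k / ∏ j ∈ Finset.Icc 1 k, (D α j : ℂ)) (m₁ z) := fun z hz => by
    rw [hm₁]
    exact (Summable.of_norm_bounded ((summable_geometric_of_lt_one hρ0 hρ1).mul_left C)
      fun k => hterm z k hz).hasSum
  have h1 := ((hs (l * y) (by simp [hl1])).add (hs (y / l) (by simp [hl1]))).sub
    ((hs y le_rfl).mul_left 2)
  have h2 := (hs y le_rfl).mul_left (-y)
  rw [← hasSum_nat_add_iff' 1] at h1
  have h3 := h1.unique (h2.congr_fun ?_)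
  · simp at h3
    linear_combination h3
  · intro k
    have hD : (D α (k + 1) : ℂ) ≠ 0 := by
      rw [D_eq_norm_sq hl]
      exact_mod_cast (pow_pos (norm_one_sub_pow_pos hc hα hl k.succ_pos) 2).ne'
    have hl0 : l ≠ 0 := norm_ne_zero_iff.mp (by simp [hl1])
    have hP : ∏ j ∈ Finset.Icc 1 (k + 1), (D α j : ℂ)
        = (∏ j ∈ Finset.Icc 1 k, (D α j : ℂ)) * D α (k + 1) :=
      Finset.prod_Icc_succ_top (by omega) _
    have h4 : (l * y) ^ (k + 1) + (y / l) ^ (k + 1) - 2 * y ^ (k + 1)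
        = -y * y ^ k * D α (k + 1) := by
      rw [D_eq_sub hl, div_eq_mul_inv, mul_pow, mul_pow]
      ring
    rw [hP, ← mul_div_assoc, ← mul_div_assoc, ← add_div, ← sub_div, h4, mul_div_mul_right _ _ hD]

/-- The average of `m₁` along the rotation orbit of `x` tends to `m₁ 0 = 1`, so `m₁` cannot vanish
on the whole orbit. -/
lemma exists_linear_solution_ne_zero {α c : ℝ} {l : ℂ} (hc : 0 < c)
    (hα : ∀ (p : ℤ) (q : ℕ), 0 < q → c / q ≤ |q * α - p|)
    (hl : l = Complex.exp (2 * Real.pi * Complex.I * (α : ℂ))) {m₁ : ℂ → ℂ}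
    (hm₁ : ∀ x : ℂ, m₁ x = ∑' k : ℕ, x ^ k / ∏ j ∈ Finset.Icc 1 k, (D α j : ℂ))
    {x : ℂ} (hx : ‖x‖ < 1) : ∃ n : ℕ, m₁ (l ^ n * x) ≠ 0 := by
  by_contra! h0
  have hl1 := norm_exp_eq_one hl
  obtain ⟨C, ρ, hC, hρ0, hρ1, hterm⟩ := exists_norm_term_le hc hα hx
  have hs : ∀ n : ℕ,
      HasSum (fun k : ℕ => (l ^ n * x) ^ k / ∏ j ∈ Finset.Icc 1 k, (D α j : ℂ)) 0 := fun n => by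
    have h := (Summable.of_norm_bounded ((summable_geometric_of_lt_one hρ0 hρ1).mul_left C)
      fun k => hterm (l ^ n * x) k (by simp [hl1])).hasSum
    rwa [← hm₁, h0] at h
  have hρ : ‖ρ‖ < 1 := by rwa [Real.norm_of_nonneg hρ0]
  have hg : Summable fun k : ℕ => C / (2 * c) * ((k : ℝ) ^ 1 * ρ ^ k) :=
    Summable.mul_left _ (summable_pow_mul_geometric_of_norm_lt_one 1 hρ)
  have hg' : Summable fun k : ℕ => C / (2 * c) * (((k + 1 : ℕ) : ℝ) ^ 1 * ρ ^ (k + 1)) :=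
    (summable_nat_add_iff 1).mpr hg
  have hbound : ∀ N : ℕ, (N : ℝ) ≤
      ∑' k : ℕ, C / (2 * c) * (((k + 1 : ℕ) : ℝ) ^ 1 * ρ ^ (k + 1)) := by
    intro N
    have h1 := hasSum_sum (s := Finset.range N) fun n _ => hs n
    rw [← hasSum_nat_add_iff' 1] at h1
    have h2 : ∀ k : ℕ, ‖∑ n ∈ Finset.range N,
        (l ^ n * x) ^ (k + 1) / ∏ j ∈ Finset.Icc 1 (k + 1), (D α j : ℂ)‖
        ≤ C / (2 * c) * (((k + 1 : ℕ) : ℝ) ^ 1 * ρ ^ (k + 1)) := by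
      intro k
      have h3 : ∑ n ∈ Finset.range N,
          (l ^ n * x) ^ (k + 1) / ∏ j ∈ Finset.Icc 1 (k + 1), (D α j : ℂ)
          = x ^ (k + 1) / (∏ j ∈ Finset.Icc 1 (k + 1), (D α j : ℂ)) *
            ∑ n ∈ Finset.range N, (l ^ (k + 1)) ^ n := by
        rw [Finset.mul_sum]
        refine Finset.sum_congr rfl fun n _ => ?_
        rw [mul_pow, ← pow_mul, ← pow_mul, mul_comm n]
        ring
      rw [h3, norm_mul]
      refine (mul_le_mul (hterm x (k + 1) le_rfl) (norm_sum_pow_le hc hα hl k.succ_pos N)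
        (norm_nonneg _) (by positivity)).trans_eq ?_
      rw [Nat.succ_eq_add_one]
      ring
    have h4 := tsum_of_norm_bounded hg'.hasSum h2
    rw [h1.tsum_eq] at h4
    simpa using h4
  obtain ⟨N, hN⟩ := exists_nat_gt
    (∑' k : ℕ, C / (2 * c) * (((k + 1 : ℕ) : ℝ) ^ 1 * ρ ^ (k + 1)))
  linarith [hbound N]

/-- for badly approximable irrational `α`, `λ = exp(2πiα)`, the linear
solution `m₁(x) = Σ_{k≥0} x^k/(D(1)⋯D(k))` (radius of convergence 1), the matrix
`A(x) = [[2-x, -1],[1, 0]]` and the vector `V(x) = (m₁(x), m₁(x/λ))`, one has the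
cocycle relation `V(λx) = A(x)·V(x)`, hence `V(λⁿx) = A(λ^{n-1}x)⋯A(x)·V(x)` for all
`n ≥ 1`; moreover for each `|x| < 1` the vector `V(x)` is nonzero and
`sup_n ‖A(λ^{n-1}x)⋯A(x)·V(x)‖ < ∞`. -/
theorem stmt15 (α : ℝ) (hirr : Irrational α)
    (hbad : ∃ c > (0 : ℝ), ∀ (p : ℤ) (q : ℕ), 0 < q → c / (q : ℝ) ^ 2 ≤ |α - p / q|)
    (l : ℂ) (hl : l = Complex.exp (2 * Real.pi * Complex.I * (α : ℂ)))
    (m₁ : ℂ → ℂ)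
    (hm₁ : ∀ x : ℂ, m₁ x = ∑' k : ℕ, x ^ k / ∏ j ∈ Finset.Icc 1 k, (D α j : ℂ))
    (A : ℂ → Matrix (Fin 2) (Fin 2) ℂ) (hA : ∀ x : ℂ, A x = !![2 - x, -1; 1, 0])
    (V : ℂ → Fin 2 → ℂ) (hV : ∀ x : ℂ, V x = ![m₁ x, m₁ (x / l)])
    (x : ℂ) (hx : ‖x‖ < 1) :
    V (l * x) = (A x).mulVec (V x) ∧
    (∀ n : ℕ, 1 ≤ n →
      V (l ^ n * x) = (matProd (fun k => A (l ^ k * x)) n).mulVec (V x)) ∧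
    V x ≠ 0 ∧
    ∃ C : ℝ, ∀ n : ℕ, ‖(matProd (fun k => A (l ^ k * x)) n).mulVec (V x)‖ ≤ C := by
  obtain ⟨c, hc, hbad⟩ := hbad
  have hα : ∀ (p : ℤ) (q : ℕ), 0 < q → c / q ≤ |q * α - p| := by
    intro p q hq
    have hq' : (0 : ℝ) < q := by exact_mod_cast hq
    have h := mul_le_mul_of_nonneg_left (hbad p q hq) hq'.le
    rw [← abs_of_pos hq', ← abs_mul, abs_of_pos hq', mul_sub, mul_div_cancel₀ _ hq'.ne'] at h
    refine le_trans (le_of_eq ?_) h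
    field_simp
  have hl1 := norm_exp_eq_one hl
  have hl0 : l ≠ 0 := norm_ne_zero_iff.mp (by simp [hl1])
  have hcocycle : ∀ y : ℂ, ‖y‖ < 1 → V (l * y) = (A y).mulVec (V y) := by
    intro y hy
    rw [hV, hV, hA, linear_solution_recurrence hc hα hl hm₁ hy, mul_div_cancel_left₀ _ hl0]
    ext i
    fin_cases i <;> simp [Matrix.mulVec, dotProduct, Fin.sum_univ_two, sub_eq_add_neg]
  have hiter : ∀ n : ℕ,
      V (l ^ n * x) = (matProd (fun k => A (l ^ k * x)) n).mulVec (V x) := by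
    intro n
    induction n with
    | zero => simp [matProd]
    | succ n ih =>
      rw [matProd, ← Matrix.mulVec_mulVec, ← ih, ← hcocycle _ (by simpa [hl1] using hx), pow_succ',
        mul_assoc]
  refine ⟨hcocycle x hx, fun n _ => hiter n, fun h => ?_, ?_⟩
  · obtain ⟨n, hn⟩ := exists_linear_solution_ne_zero hc hα hl hm₁ hx
    apply hn
    have h1 := hiter n
    rw [h, Matrix.mulVec_zero, hV] at h1
    simpa using congrFun h1 0
  · obtain ⟨C, ρ, hC, hρ0, hρ1, hterm⟩ := exists_norm_term_le hc hα hx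
    have hm : ∀ y : ℂ, ‖y‖ ≤ ‖x‖ → ‖m₁ y‖ ≤ C * (1 - ρ)⁻¹ := fun y hy => by
      rw [hm₁]
      exact tsum_of_norm_bounded ((hasSum_geometric_of_lt_one hρ0 hρ1).mul_left C)
        fun k => hterm y k hy
    have hC' : 0 ≤ C * (1 - ρ)⁻¹ := (norm_nonneg _).trans (hm x le_rfl)
    refine ⟨C * (1 - ρ)⁻¹, fun n => ?_⟩
    rw [← hiter, hV, pi_norm_le_iff_of_nonneg hC']
    intro i
    fin_cases i
    · exact hm _ (by simp [hl1])
    · exact hm _ (by simp [hl1])
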